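/- arXiv:2603.19463 — 6 statements merged into one kernel-verified Lean document; each statement's English description precedes it below -/
import Mathlib

section
/- Let v ∈ C²(H) and define its cylindrical approximation v^d(x) := v(P_d x), so that Dv^d(x) = P_d Dv(P_d x) and D²v^d(x) = P_d ∘ D²v(P_d x) ∘ P_d. Then v^d → v in the compact-open topology of C²(H) generated by the seminorms 𝐏^{COCO}: for all compact sets K, K' ⊆ H and every ε > 0 there exists d̄ ∈ ℕ such that for all d ≥ d̄: sup_{x∈K} |v(x) − v(P_d x)| < ε, sup_{x∈K} ‖Dv(x) − P_d Dv(P_d x)‖ < ε, and sup_{x∈K, h∈K'} ‖D²v(x)h − P_d D²v(P_d x) P_d h‖ < ε. -/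
open Filter Topology
open scoped RealInnerProductSpace

theorem aux_unif {X E : Type*} [TopologicalSpace X] [NormedAddCommGroup E]
    (F : ℕ → X → E) (f : X → E) (hf : Continuous f)
    (hF : ∀ x, Tendsto (fun y : ℕ × X => F y.1 y.2) (atTop ×ˢ 𝓝 x) (𝓝 (f x)))
    (K : Set X) (hK : IsCompact K) (ε : ℝ) (hε : 0 < ε) :
    ∀ᶠ d in atTop, ∀ x ∈ K, ‖f x - F d x‖ < ε := by
  have h : TendstoLocallyUniformlyOn F f atTop K := by
    rw [tendstoLocallyUniformlyOn_iff_forall_tendsto]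
    intro x _
    have h1 : Tendsto (fun y : ℕ × X => f y.2) (atTop ×ˢ 𝓝 x) (𝓝 (f x)) :=
      (hf.tendsto x).comp tendsto_snd
    have h2 := (h1.prodMk_nhds (hF x)).mono_right (nhds_le_uniformity (f x))
    exact h2.mono_left (Filter.prod_mono le_rfl nhdsWithin_le_nhds)
  rw [tendstoLocallyUniformlyOn_iff_tendstoUniformlyOn_of_compact hK,
    Metric.tendstoUniformlyOn_iff] at h
  simpa only [dist_eq_norm] using h ε hε

/-- the cylindrical approximations `v^d (x) = v (P d x)` of a function `v ∈ C²(H)`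
converge to `v` in the compact-open topology of `C²(H)` generated by the seminorms `𝐏^{COCO}`:
uniformly on compacts for the function values and the gradients, and uniformly on
`K × K'` for the Hessians applied to vectors `h ∈ K'`. -/
theorem cylindrical_approximation_tendsto_COCO
    {H : Type*} [NormedAddCommGroup H] [InnerProductSpace ℝ H] [CompleteSpace H]
    (e : ℕ → H) (he : Orthonormal ℝ e)
    (htot : Dense ((Submodule.span ℝ (Set.range e) : Submodule ℝ H) : Set H))
    (P : ℕ → H → H)
    (hP : ∀ (d : ℕ) (x : H), P d x = ∑ i ∈ Finset.range d, ⟪e i, x⟫ • e i)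
    (v : H → ℝ) (hv : ContDiff ℝ 2 v)
    (K K' : Set H) (hK : IsCompact K) (hK' : IsCompact K')
    (ε : ℝ) (hε : 0 < ε) :
    ∃ D : ℕ, ∀ d ≥ D,
      (∀ x ∈ K, |v x - v (P d x)| < ε) ∧
      (∀ x ∈ K, ‖gradient v x - P d (gradient v (P d x))‖ < ε) ∧
      (∀ x ∈ K, ∀ h ∈ K',
        ‖fderiv ℝ (gradient v) x h - P d (fderiv ℝ (gradient v) (P d x) (P d h))‖ < ε) := by
  have hlin : ∀ d x y, P d x - P d y = P d (x - y) := by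
    intro d x y
    simp only [hP, inner_sub_right, sub_smul, Finset.sum_sub_distrib]
  have hnorm : ∀ d x, ‖P d x‖ ≤ ‖x‖ := by
    intro d x
    have h1 : ‖P d x‖ ^ 2 = ∑ i ∈ Finset.range d, ‖⟪e i, x⟫‖ ^ 2 := by
      rw [← real_inner_self_eq_norm_sq, hP, he.inner_sum]
      refine Finset.sum_congr rfl fun i _ => ?_
      simp [sq]
    have h2 := he.sum_inner_products_le x (s := Finset.range d)
    rw [← h1] at h2
    exact le_of_sq_le_sq h2 (norm_nonneg _)
  have hpt : ∀ x, Tendsto (fun d => P d x) atTop (𝓝 x) := by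
    intro x
    have hsp : ⊤ ≤ (Submodule.span ℝ (Set.range e)).topologicalClosure :=
      (Submodule.dense_iff_topologicalClosure_eq_top.mp htot).ge
    have h := ((HilbertBasis.mk he hsp).hasSum_repr x).tendsto_sum_nat
    refine h.congr fun d => ?_
    rw [hP]
    refine Finset.sum_congr rfl fun i _ => ?_
    rw [HilbertBasis.repr_apply_apply, HilbertBasis.coe_mk]
  have hcomp : ∀ {ι : Type _} {l : Filter ι} (a : ι → ℕ) (b : ι → H) (x : H),
      Tendsto a l atTop → Tendsto b l (𝓝 x) → Tendsto (fun i => P (a i) (b i)) l (𝓝 x) := by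
    intro ι l a b x ha hb
    have h1 : Tendsto (fun i => P (a i) (b i - x)) l (𝓝 0) := by
      refine squeeze_zero_norm (fun i => hnorm _ _) ?_
      simpa using (hb.sub_const x).norm
    have h2 := h1.add ((hpt x).comp ha)
    rw [zero_add] at h2
    refine h2.congr fun i => ?_
    simp [← hlin]
  have hgrad : gradient v = fun x => (InnerProductSpace.toDual ℝ H).symm (fderiv ℝ v x) := rfl
  have hg : ContDiff ℝ 1 (gradient v) := by
    rw [hgrad]
    exact (InnerProductSpace.toDual ℝ H).symm.contDiff.comp
      (hv.fderiv_right (m := 1) (by norm_num))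
  have hgc : Continuous (gradient v) := hg.continuous
  have hHc : Continuous (fderiv ℝ (gradient v)) := hg.continuous_fderiv (by norm_num)
  have hPx : ∀ x, Tendsto (fun y : ℕ × H => P y.1 y.2) (atTop ×ˢ 𝓝 x) (𝓝 x) :=
    fun x => hcomp _ _ x tendsto_fst tendsto_snd
  have e1 := aux_unif (fun d x => v (P d x)) v hv.continuous
    (fun x => (hv.continuous.tendsto x).comp (hPx x)) K hK ε hε
  have e2 := aux_unif (fun d x => P d (gradient v (P d x))) (gradient v) hgc
    (fun x => hcomp _ _ _ tendsto_fst ((hgc.tendsto x).comp (hPx x))) K hK ε hε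
  have e3 := aux_unif
    (fun d (z : H × H) => P d (fderiv ℝ (gradient v) (P d z.1) (P d z.2)))
    (fun z : H × H => fderiv ℝ (gradient v) z.1 z.2)
    ((hHc.comp continuous_fst).clm_apply continuous_snd)
    (fun z => by
      refine hcomp _ _ _ tendsto_fst ?_
      have t1 : Tendsto (fun y : ℕ × (H × H) => P y.1 y.2.1) (atTop ×ˢ 𝓝 z) (𝓝 z.1) :=
        hcomp _ _ _ tendsto_fst ((continuous_fst.tendsto z).comp tendsto_snd)
      have t2 : Tendsto (fun y : ℕ × (H × H) => P y.1 y.2.2) (atTop ×ˢ 𝓝 z) (𝓝 z.2) :=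
        hcomp _ _ _ tendsto_fst ((continuous_snd.tendsto z).comp tendsto_snd)
      have c : Continuous (fun w : H × H => fderiv ℝ (gradient v) w.1 w.2) :=
        (hHc.comp continuous_fst).clm_apply continuous_snd
      exact (c.tendsto (z.1, z.2)).comp (t1.prodMk_nhds t2))
    (K ×ˢ K') (hK.prod hK') ε hε
  obtain ⟨D, hD⟩ := eventually_atTop.mp (e1.and (e2.and e3))
  refine ⟨D, fun d hd => ?_⟩
  obtain ⟨a1, a2, a3⟩ := hD d hd
  exact ⟨a1, a2, fun x hx h hh => a3 (x, h) ⟨hx, hh⟩⟩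
end

section
/- Let w, q ≥ 1, let v ∈ C²_{w,q}(H), and let μ, μ' be Borel probability measures on H with ‖μ‖_q < ∞ and ‖μ'‖_w < ∞. Then the cylindrical approximations v^d(x) := v(P_d x) converge to v in the weighted Sobolev-type norm: as d → ∞, ∫_H |v(x) − v(P_d x)|^w μ(dx) → 0, ∫_H ‖Dv(x) − P_d Dv(P_d x)‖^w μ(dx) → 0, and ∫_{H×H} ‖D²v(x)h − P_d D²v(P_d x) P_d h‖^w μ(dx) μ'(dh) → 0. -/
open Filter Topology MeasureTheory
open scoped RealInnerProductSpace ENNReal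

theorem aux_dct {X E : Type*} [TopologicalSpace X] [MeasurableSpace X] [BorelSpace X]
    [NormedAddCommGroup E] (m : Measure X) (w : ℝ) (hw : 1 ≤ w) (A : X → E) (B : ℕ → X → E)
    (G : X → ℝ) (hA : Continuous A) (hB : ∀ d, Continuous (B d))
    (hlim : ∀ x, Tendsto (fun d => B d x) atTop (𝓝 (A x)))
    (hAG : ∀ x, ‖A x‖ ^ w ≤ G x) (hBG : ∀ d x, ‖B d x‖ ^ w ≤ G x)
    (hG : ∫⁻ x, ENNReal.ofReal (G x) ∂m < ⊤) :
    Tendsto (fun d : ℕ => ∫⁻ x, ENNReal.ofReal (‖A x - B d x‖ ^ w) ∂m) atTop (𝓝 0) := by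
  have hw0 : 0 ≤ w := by linarith
  have h0 : (0 : ℝ≥0∞) = ∫⁻ x : X, 0 ∂m := by simp
  rw [h0]
  refine tendsto_lintegral_of_dominated_convergence
    (fun x => ENNReal.ofReal (2 ^ w) * ENNReal.ofReal (G x)) ?_ ?_ ?_ ?_
  · intro d
    have : Continuous (fun x => ‖A x - B d x‖ ^ w) :=
      ((hA.sub (hB d)).norm).rpow_const (fun _ => Or.inr hw0)
    exact this.measurable.ennreal_ofReal
  · intro d
    refine Eventually.of_forall fun x => ?_
    simp only
    rw [← ENNReal.ofReal_mul (by positivity)]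
    apply ENNReal.ofReal_le_ofReal
    have h1 : ‖A x - B d x‖ ≤ 2 * max ‖A x‖ ‖B d x‖ := by
      have := norm_sub_le (A x) (B d x)
      have := le_max_left ‖A x‖ ‖B d x‖
      have := le_max_right ‖A x‖ ‖B d x‖
      linarith
    calc ‖A x - B d x‖ ^ w ≤ (2 * max ‖A x‖ ‖B d x‖) ^ w :=
          Real.rpow_le_rpow (norm_nonneg _) h1 hw0
      _ = 2 ^ w * (max ‖A x‖ ‖B d x‖) ^ w := Real.mul_rpow (by norm_num) (by positivity)
      _ ≤ 2 ^ w * G x := by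
          gcongr
          rcases max_choice ‖A x‖ ‖B d x‖ with h | h <;> rw [h]
          · exact hAG x
          · exact hBG d x
  · rw [lintegral_const_mul' _ _ ENNReal.ofReal_ne_top]
    exact ENNReal.mul_ne_top ENNReal.ofReal_ne_top hG.ne
  · refine Eventually.of_forall fun x => ?_
    have h1 : Tendsto (fun d => ‖A x - B d x‖) atTop (𝓝 0) := by
      have := (tendsto_const_nhds (x := A x)).sub (hlim x)
      simpa using this.norm
    have h2 := h1.rpow_const (p := w) (Or.inr hw0)
    rw [Real.zero_rpow (by linarith)] at h2
    simpa using ENNReal.tendsto_ofReal h2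

/-- convergence of the cylindrical approximations `v^d(x) = v(P d x)` of a function
`v ∈ C²_{w,q}(H)` to `v` in the weighted Sobolev-type norm determined by Borel probability
measures `μ, μ'` with `‖μ‖_q < ∞` and `‖μ'‖_w < ∞`. -/
theorem cylindrical_approximation_tendsto_weighted_sobolev
    {H : Type*} [NormedAddCommGroup H] [InnerProductSpace ℝ H] [CompleteSpace H]
    [MeasurableSpace H] [BorelSpace H]
    (e : ℕ → H) (he : Orthonormal ℝ e)
    (htot : Dense ((Submodule.span ℝ (Set.range e) : Submodule ℝ H) : Set H))
    (P : ℕ → H → H)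
    (hP : ∀ (d : ℕ) (x : H), P d x = ∑ i ∈ Finset.range d, ⟪e i, x⟫ • e i)
    (w q : ℝ) (hw : 1 ≤ w) (hq : 1 ≤ q)
    (μ μ' : Measure H) [IsProbabilityMeasure μ] [IsProbabilityMeasure μ']
    (hμq : ∫⁻ x, ENNReal.ofReal (‖x‖ ^ q) ∂μ < ⊤)
    (hμ'w : ∫⁻ h, ENNReal.ofReal (‖h‖ ^ w) ∂μ' < ⊤)
    (v : H → ℝ) (hv : ContDiff ℝ 2 v)
    (C : ℝ) (hC : 0 < C)
    (hgrowth : ∀ x : H,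
      |v x| ^ w + ‖gradient v x‖ ^ w + ‖fderiv ℝ (gradient v) x‖ ^ w ≤ C * (1 + ‖x‖ ^ q)) :
    Tendsto (fun d : ℕ =>
        ∫⁻ x, ENNReal.ofReal (|v x - v (P d x)| ^ w) ∂μ) atTop (𝓝 0) ∧
    Tendsto (fun d : ℕ =>
        ∫⁻ x, ENNReal.ofReal (‖gradient v x - P d (gradient v (P d x))‖ ^ w) ∂μ) atTop (𝓝 0) ∧
    Tendsto (fun d : ℕ =>
        ∫⁻ p : H × H, ENNReal.ofReal
          (‖fderiv ℝ (gradient v) p.1 p.2 -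
              P d (fderiv ℝ (gradient v) (P d p.1) (P d p.2))‖ ^ w) ∂(μ.prod μ'))
      atTop (𝓝 0) := by
  have hw0 : 0 ≤ w := by linarith
  have hq0 : 0 ≤ q := by linarith
  have : SecondCountableTopology H := by
    have hs : TopologicalSpace.IsSeparable
        ((Submodule.span ℝ (Set.range e) : Submodule ℝ H) : Set H) :=
      (Set.countable_range e).isSeparable.span
    have : TopologicalSpace.SeparableSpace H := by
      rw [← TopologicalSpace.isSeparable_univ_iff, ← htot.closure_eq]
      exact hs.closure
    exact UniformSpace.secondCountable_of_separable H
  have hPc : ∀ d, Continuous (P d) := by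
    intro d
    have : P d = fun x => ∑ i ∈ Finset.range d, ⟪e i, x⟫ • e i := funext (hP d)
    rw [this]
    fun_prop
  have hPsub : ∀ d x y, P d (x - y) = P d x - P d y := by
    intro d x y
    simp only [hP, inner_sub_right, sub_smul, Finset.sum_sub_distrib]
  have hPn : ∀ d x, ‖P d x‖ ≤ ‖x‖ := by
    intro d x
    have h1 : ‖P d x‖ ^ 2 = ∑ i ∈ Finset.range d, ‖⟪e i, x⟫‖ ^ 2 := by
      rw [hP, ← real_inner_self_eq_norm_sq, he.inner_sum]
      refine Finset.sum_congr rfl fun i _ => ?_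
      simp [sq]
    have h2 := he.sum_inner_products_le x (s := Finset.range d)
    rw [← h1] at h2
    exact (sq_le_sq₀ (norm_nonneg _) (norm_nonneg _)).mp h2
  have hPl : ∀ x, Tendsto (fun d => P d x) atTop (𝓝 x) := by
    intro x
    have hb : ⊤ ≤ (Submodule.span ℝ (Set.range e)).topologicalClosure := by
      rw [Submodule.dense_iff_topologicalClosure_eq_top.mp htot]
    have := ((HilbertBasis.mk he hb).hasSum_repr x).tendsto_sum_nat
    simpa [hP, HilbertBasis.repr_apply_apply] using this
  have hPl2 : ∀ (y : ℕ → H) (x : H), Tendsto y atTop (𝓝 x) →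
      Tendsto (fun d => P d (y d)) atTop (𝓝 x) := by
    intro y x hy
    have h1 : Tendsto (fun d => P d (y d - x)) atTop (𝓝 0) := by
      refine squeeze_zero_norm (fun d => hPn d _) ?_
      simpa using (hy.sub_const x).norm
    have h2 := h1.add (hPl x)
    simpa [hPsub] using h2
  have hgc : ContDiff ℝ 1 (gradient v) := by
    have h1 : ContDiff ℝ 1 (fderiv ℝ v) := hv.fderiv_right (by norm_num)
    exact (InnerProductSpace.toDual ℝ H).symm.contDiff.comp h1
  have hg0 : Continuous (gradient v) := hgc.continuous
  have hh0 : Continuous (fderiv ℝ (gradient v)) := hgc.continuous_fderiv (by norm_num)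
  have hmono : ∀ d x, C * (1 + ‖P d x‖ ^ q) ≤ C * (1 + ‖x‖ ^ q) := by
    intro d x
    have := Real.rpow_le_rpow (norm_nonneg _) (hPn d x) hq0
    gcongr
  have hv1 : ∀ x, ‖v x‖ ^ w ≤ C * (1 + ‖x‖ ^ q) := by
    intro x
    have := hgrowth x
    have : 0 ≤ ‖gradient v x‖ ^ w := by positivity
    have : 0 ≤ ‖fderiv ℝ (gradient v) x‖ ^ w := by positivity
    rw [Real.norm_eq_abs]
    linarith
  have hv2 : ∀ x, ‖gradient v x‖ ^ w ≤ C * (1 + ‖x‖ ^ q) := by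
    intro x
    have := hgrowth x
    have : 0 ≤ |v x| ^ w := by positivity
    have : 0 ≤ ‖fderiv ℝ (gradient v) x‖ ^ w := by positivity
    linarith
  have hv3 : ∀ x, ‖fderiv ℝ (gradient v) x‖ ^ w ≤ C * (1 + ‖x‖ ^ q) := by
    intro x
    have := hgrowth x
    have : 0 ≤ |v x| ^ w := by positivity
    have : 0 ≤ ‖gradient v x‖ ^ w := by positivity
    linarith
  have hv3' : ∀ x h, ‖fderiv ℝ (gradient v) x h‖ ^ w ≤ C * (1 + ‖x‖ ^ q) * ‖h‖ ^ w := by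
    intro x h
    calc ‖fderiv ℝ (gradient v) x h‖ ^ w ≤ (‖fderiv ℝ (gradient v) x‖ * ‖h‖) ^ w :=
          Real.rpow_le_rpow (norm_nonneg _) (ContinuousLinearMap.le_opNorm _ _) hw0
      _ = ‖fderiv ℝ (gradient v) x‖ ^ w * ‖h‖ ^ w :=
          Real.mul_rpow (norm_nonneg _) (norm_nonneg _)
      _ ≤ _ := by
          gcongr
          exact hv3 x
  have hGi : ∫⁻ x, ENNReal.ofReal (C * (1 + ‖x‖ ^ q)) ∂μ < ⊤ := by
    have : ∀ x : H, ENNReal.ofReal (C * (1 + ‖x‖ ^ q))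
        = ENNReal.ofReal C * (1 + ENNReal.ofReal (‖x‖ ^ q)) := by
      intro x
      rw [ENNReal.ofReal_mul hC.le, ENNReal.ofReal_add (by norm_num) (by positivity),
        ENNReal.ofReal_one]
    simp_rw [this]
    rw [lintegral_const_mul' _ _ ENNReal.ofReal_ne_top, lintegral_add_left measurable_const]
    refine ENNReal.mul_lt_top ENNReal.ofReal_lt_top ?_
    simpa using hμq
  have hcont_q : Continuous (fun x : H => C * (1 + ‖x‖ ^ q)) :=
    continuous_const.mul (continuous_const.add (continuous_norm.rpow_const (fun _ => Or.inr hq0)))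
  have hcont_w : Continuous (fun x : H => ‖x‖ ^ w) :=
    continuous_norm.rpow_const (fun _ => Or.inr hw0)
  refine ⟨?_, ?_, ?_⟩
  · have := aux_dct μ w hw v (fun d x => v (P d x)) (fun x => C * (1 + ‖x‖ ^ q))
      hv.continuous (fun d => hv.continuous.comp (hPc d))
      (fun x => (hv.continuous.tendsto x).comp (hPl x)) hv1
      (fun d x => (hv1 _).trans (hmono d x)) hGi
    simpa only [Real.norm_eq_abs] using this
  · exact aux_dct μ w hw (gradient v) (fun d x => P d (gradient v (P d x)))
      (fun x => C * (1 + ‖x‖ ^ q))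
      hg0 (fun d => (hPc d).comp (hg0.comp (hPc d)))
      (fun x => hPl2 _ _ ((hg0.tendsto x).comp (hPl x))) hv2
      (fun d x => (Real.rpow_le_rpow (norm_nonneg _) (hPn d _) hw0).trans
        ((hv2 _).trans (hmono d x))) hGi
  · have hA : Continuous (fun p : H × H => fderiv ℝ (gradient v) p.1 p.2) :=
      (hh0.comp continuous_fst).clm_apply continuous_snd
    have hPP : ∀ d, Continuous (fun p : H × H => (P d p.1, P d p.2)) := fun d =>
      ((hPc d).comp continuous_fst).prodMk ((hPc d).comp continuous_snd)
    refine aux_dct (μ.prod μ') w hw (fun p : H × H => fderiv ℝ (gradient v) p.1 p.2)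
      (fun d p => P d (fderiv ℝ (gradient v) (P d p.1) (P d p.2)))
      (fun p => C * (1 + ‖p.1‖ ^ q) * ‖p.2‖ ^ w) hA
      (fun d => (hPc d).comp (hA.comp (hPP d))) ?_ (fun p => hv3' _ _) ?_ ?_
    · intro p
      apply hPl2
      exact (hA.tendsto p).comp ((hPl p.1).prodMk_nhds (hPl p.2))
    · intro d p
      refine (Real.rpow_le_rpow (norm_nonneg _) (hPn d _) hw0).trans ((hv3' _ _).trans ?_)
      have h1 := hmono d p.1
      have h2 := Real.rpow_le_rpow (norm_nonneg _) (hPn d p.2) hw0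
      exact mul_le_mul h1 h2 (by positivity) (by positivity)
    · have : ∀ p : H × H, ENNReal.ofReal (C * (1 + ‖p.1‖ ^ q) * ‖p.2‖ ^ w)
          = ENNReal.ofReal (C * (1 + ‖p.1‖ ^ q)) * ENNReal.ofReal (‖p.2‖ ^ w) := fun p =>
        ENNReal.ofReal_mul (by positivity)
      simp_rw [this]
      rw [lintegral_prod_mul hcont_q.measurable.ennreal_ofReal.aemeasurable
        hcont_w.measurable.ennreal_ofReal.aemeasurable]
      exact ENNReal.mul_lt_top hGi hμ'w
end

section
/- Verification of the L² consistency condition when L commutes with the projections: assume in addition that L P_d x = P_d L x for every x ∈ D(L) and every d ∈ ℕ (for instance when L is diagonalized by the basis {e_i}). Let v ∈ C²(H) be such that Dv(x) ∈ D(L) for every x ∈ H, the map x ↦ L Dv(x) is continuous from H to H, and ‖L Dv(x)‖⁴ ≤ C(1+‖x‖^q) for some C > 0, q ≥ 1 and all x ∈ H. Let μ be a Borel probability measure on H with ∫_H ‖x‖⁴ μ(dx) < ∞ and ∫_H ‖x‖^q μ(dx) < ∞. Then ∫_H |⟨L Dv(x) − L P_d Dv(P_d x), x⟩|² μ(dx)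 → 0 as d → ∞. -/
open Filter Topology MeasureTheory
open scoped RealInnerProductSpace ENNReal

/-- verification of the L² consistency condition when the (possibly unbounded)
closed, densely defined operator `L` commutes with the projections `P d`. -/
theorem consistency_L2_of_commuting_projections
    {H : Type*} [NormedAddCommGroup H] [InnerProductSpace ℝ H] [CompleteSpace H]
    [MeasurableSpace H] [BorelSpace H]
    (e : ℕ → H) (he : Orthonormal ℝ e)
    (htot : Dense ((Submodule.span ℝ (Set.range e) : Submodule ℝ H) : Set H))
    (P : ℕ → H → H)
    (hP : ∀ (d : ℕ) (x : H), P d x = ∑ i ∈ Finset.range d, ⟪e i, x⟫ • e i)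
    (L : H →ₗ[ℝ] H) (Ldom : Submodule ℝ H)
    (hLdense : Dense (Ldom : Set H))
    (hLclosed : IsClosed {p : H × H | p.1 ∈ Ldom ∧ p.2 = L p.1})
    (heL : ∀ i : ℕ, e i ∈ Ldom)
    (hcomm : ∀ (d : ℕ), ∀ x ∈ Ldom, L (P d x) = P d (L x))
    (v : H → ℝ) (hv : ContDiff ℝ 2 v)
    (hDvdom : ∀ x : H, gradient v x ∈ Ldom)
    (hLDv : Continuous fun x : H => L (gradient v x))
    (C q : ℝ) (hC : 0 < C) (hq : 1 ≤ q)
    (hgrowth : ∀ x : H, ‖L (gradient v x)‖ ^ (4 : ℝ) ≤ C * (1 + ‖x‖ ^ q))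
    (μ : Measure H) [IsProbabilityMeasure μ]
    (hμ4 : ∫⁻ x, ENNReal.ofReal (‖x‖ ^ (4 : ℝ)) ∂μ < ⊤)
    (hμq : ∫⁻ x, ENNReal.ofReal (‖x‖ ^ q) ∂μ < ⊤) :
    Tendsto (fun d : ℕ =>
        ∫⁻ x, ENNReal.ofReal
          (|⟪L (gradient v x) - L (P d (gradient v (P d x))), x⟫| ^ (2 : ℝ)) ∂μ)
      atTop (𝓝 0) := by
  have hPc : ∀ d, Continuous (P d) := by
    intro d
    have : P d = fun x => ∑ i ∈ Finset.range d, ⟪e i, x⟫ • e i := funext (hP d)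
    rw [this]
    fun_prop
  have hPn : ∀ d x, ‖P d x‖ ≤ ‖x‖ := by
    intro d x
    have h1 : ‖P d x‖ ^ 2 = ∑ i ∈ Finset.range d, ‖⟪e i, x⟫‖ ^ 2 := by
      rw [← real_inner_self_eq_norm_sq, hP, he.inner_sum]
      refine Finset.sum_congr rfl fun i _ => ?_
      simp [sq]
    have h2 := he.sum_inner_products_le x (s := Finset.range d)
    rw [← h1] at h2
    exact (sq_le_sq₀ (norm_nonneg _) (norm_nonneg _)).mp h2
  have hPsub : ∀ d x y, P d (x - y) = P d x - P d y := by
    intro d x y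
    simp only [hP, inner_sub_right, sub_smul, Finset.sum_sub_distrib]
  have hPt : ∀ x, Tendsto (fun d => P d x) atTop (𝓝 x) := by
    intro x
    have hsp : ⊤ ≤ (Submodule.span ℝ (Set.range e)).topologicalClosure := by
      rw [Submodule.dense_iff_topologicalClosure_eq_top.mp htot]
    have := ((HilbertBasis.mk he hsp).hasSum_repr x).tendsto_sum_nat
    simp only [HilbertBasis.repr_apply_apply, HilbertBasis.coe_mk] at this
    simpa only [hP] using this
  set G : H → H := fun x => L (gradient v x) with hG
  have hPG : ∀ d x, L (P d (gradient v (P d x))) = P d (G (P d x)) :=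
    fun d x => hcomm d _ (hDvdom _)
  have hgr : ∀ x, ‖G x‖ ^ 4 ≤ C * (1 + ‖x‖ ^ q) := by
    intro x
    have := hgrowth x
    exact_mod_cast this
  have hF : ∀ d, Continuous fun x => |⟪G x - P d (G (P d x)), x⟫| ^ (2 : ℝ) := by
    intro d
    have h1 : Continuous fun x => P d (G (P d x)) := (hPc d).comp (hLDv.comp (hPc d))
    have h2 : Continuous fun x => |⟪G x - P d (G (P d x)), x⟫| :=
      ((hLDv.sub h1).inner continuous_id).abs
    exact h2.rpow_const fun _ => Or.inr (by norm_num)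
  have hq0 : (0 : ℝ) ≤ q := by linarith
  have hmq : Measurable fun x : H => ENNReal.ofReal (‖x‖ ^ q) :=
    (continuous_norm.rpow_const fun _ => Or.inr hq0).measurable.ennreal_ofReal
  have hm4 : Measurable fun x : H => ENNReal.ofReal (‖x‖ ^ (4 : ℝ)) :=
    (continuous_norm.rpow_const fun _ => Or.inr (by norm_num)).measurable.ennreal_ofReal
  simp only [hPG]
  have key := tendsto_lintegral_of_dominated_convergence (μ := μ)
    (F := fun d x => ENNReal.ofReal (|⟪G x - P d (G (P d x)), x⟫| ^ (2 : ℝ)))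
    (f := fun _ => 0)
    (fun x => ENNReal.ofReal (4 * C) * (1 + ENNReal.ofReal (‖x‖ ^ q))
      + ENNReal.ofReal (‖x‖ ^ (4 : ℝ)))
    (fun d => (hF d).measurable.ennreal_ofReal) ?_ ?_ ?_
  · simpa using key
  · intro d
    refine Eventually.of_forall fun x => ?_
    have hxq : 0 ≤ ‖x‖ ^ q := by positivity
    show _ ≤ ENNReal.ofReal (4 * C) * (1 + ENNReal.ofReal (‖x‖ ^ q))
      + ENNReal.ofReal (‖x‖ ^ (4 : ℝ))
    rw [← ENNReal.ofReal_one, ← ENNReal.ofReal_add zero_le_one hxq,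
      ← ENNReal.ofReal_mul (by positivity), ← ENNReal.ofReal_add (by positivity) (by positivity)]
    apply ENNReal.ofReal_le_ofReal
    have e1 : ‖x‖ ^ (4 : ℝ) = ‖x‖ ^ 4 := by norm_cast
    have e2 : |⟪G x - P d (G (P d x)), x⟫| ^ (2 : ℝ) = |⟪G x - P d (G (P d x)), x⟫| ^ 2 := by
      norm_cast
    rw [e1, e2]
    have a1 := hgr x
    have b1 : ‖G (P d x)‖ ^ 4 ≤ C * (1 + ‖x‖ ^ q) := by
      refine (hgr (P d x)).trans ?_
      have := Real.rpow_le_rpow (norm_nonneg _) (hPn d x) hq0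
      gcongr
    have c1 : |⟪G x - P d (G (P d x)), x⟫| ≤ (‖G x‖ + ‖G (P d x)‖) * ‖x‖ := by
      refine (abs_real_inner_le_norm _ _).trans ?_
      gcongr
      exact (norm_sub_le _ _).trans (by gcongr; exact hPn d _)
    have c2 := pow_le_pow_left₀ (abs_nonneg _) c1 2
    generalize ‖G x‖ = a at *
    generalize ‖G (P d x)‖ = b at *
    generalize ‖x‖ = t at *
    have d1 : ((a + b) * t) ^ 2 ≤ 2 * a ^ 4 + 2 * b ^ 4 + t ^ 4 := by
      have s1 : (a + b) ^ 2 * t ^ 2 ≤ 2 * (a ^ 2 + b ^ 2) * t ^ 2 := by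
        gcongr
        nlinarith [sq_nonneg (a - b)]
      nlinarith [sq_nonneg (a ^ 2 + b ^ 2 - t ^ 2), sq_nonneg (a ^ 2 - b ^ 2)]
    linarith
  · rw [lintegral_add_right _ hm4, lintegral_const_mul' _ _ ENNReal.ofReal_ne_top,
      lintegral_add_right _ hmq]
    refine ENNReal.add_ne_top.mpr ⟨ENNReal.mul_ne_top ENNReal.ofReal_ne_top ?_, hμ4.ne⟩
    exact ENNReal.add_ne_top.mpr ⟨by simp, hμq.ne⟩
  · refine Eventually.of_forall fun x => ?_
    have t1 : Tendsto (fun d => G (P d x)) atTop (𝓝 (G x)) := (hLDv.tendsto x).comp (hPt x)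
    have t2 : Tendsto (fun d => P d (G (P d x)) - P d (G x)) atTop (𝓝 0) := by
      have t3 : Tendsto (fun d => ‖G (P d x) - G x‖) atTop (𝓝 0) :=
        tendsto_iff_norm_sub_tendsto_zero.mp t1
      refine squeeze_zero_norm (fun d => ?_) t3
      rw [← hPsub]
      exact hPn d _
    have t4 : Tendsto (fun d => P d (G (P d x))) atTop (𝓝 (G x)) := by
      simpa using t2.add (hPt (G x))
    have t5 : Tendsto (fun d => |⟪G x - P d (G (P d x)), x⟫|) atTop (𝓝 0) := by
      simpa using ((tendsto_const_nhds (x := G x)).sub t4).inner (𝕜 := ℝ)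
        (tendsto_const_nhds (x := x)) |>.abs
    have t6 := t5.rpow_const (p := 2) (Or.inr (by norm_num))
    simpa using ENNReal.tendsto_ofReal t6
end

section
/- Verification of the compact-set consistency condition when L commutes with the projections: assume in addition that L P_d x = P_d L x for every x ∈ D(L) and every d ∈ ℕ. Let v ∈ C²(H) be such that Dv(x) ∈ D(L) for every x ∈ H and the map x ↦ L Dv(x) is continuous from H to H. Then for every compact set K ⊆ H, sup_{x∈K} |⟨L(Dv(x) − P_d Dv(P_d x)), x⟩| → 0 as d → ∞. -/
open Filter Topology
open scoped RealInnerProductSpace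

/-- verification of the compact-set consistency condition when the (possibly
unbounded) closed, densely defined operator `L` commutes with the projections `P d`. -/
theorem consistency_compact_of_commuting_projections
    {H : Type*} [NormedAddCommGroup H] [InnerProductSpace ℝ H] [CompleteSpace H]
    (e : ℕ → H) (he : Orthonormal ℝ e)
    (htot : Dense ((Submodule.span ℝ (Set.range e) : Submodule ℝ H) : Set H))
    (P : ℕ → H → H)
    (hP : ∀ (d : ℕ) (x : H), P d x = ∑ i ∈ Finset.range d, ⟪e i, x⟫ • e i)
    (L : H →ₗ[ℝ] H) (Ldom : Submodule ℝ H)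
    (hLdense : Dense (Ldom : Set H))
    (hLclosed : IsClosed {p : H × H | p.1 ∈ Ldom ∧ p.2 = L p.1})
    (heL : ∀ i : ℕ, e i ∈ Ldom)
    (hcomm : ∀ (d : ℕ), ∀ x ∈ Ldom, L (P d x) = P d (L x))
    (v : H → ℝ) (hv : ContDiff ℝ 2 v)
    (hDvdom : ∀ x : H, gradient v x ∈ Ldom)
    (hLDv : Continuous fun x : H => L (gradient v x))
    (K : Set H) (hK : IsCompact K) :
    ∀ ε > 0, ∃ D : ℕ, ∀ d ≥ D, ∀ x ∈ K,
      |⟪L (gradient v x - P d (gradient v (P d x))), x⟫| < ε := by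
  have hsub : ∀ d x y, P d (x - y) = P d x - P d y := by
    intro d x y
    simp [hP, inner_sub_right, sub_smul, Finset.sum_sub_distrib]
  have hsymm : ∀ d x y, ⟪P d x, y⟫ = ⟪x, P d y⟫ := by
    intro d x y
    simp only [hP, sum_inner, inner_sum, real_inner_smul_left, real_inner_smul_right]
    refine Finset.sum_congr rfl fun i _ => ?_
    rw [real_inner_comm x (e i)]
    ring
  have hnorm : ∀ d x, ‖P d x‖ ≤ ‖x‖ := by
    intro d x
    have h1 : ‖P d x‖ ^ 2 = ∑ i ∈ Finset.range d, ‖⟪e i, x⟫‖ ^ 2 := by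
      rw [← real_inner_self_eq_norm_sq, hP, he.inner_sum]
      refine Finset.sum_congr rfl fun i _ => ?_
      simp [sq]
    have h2 := he.sum_inner_products_le x (s := Finset.range d)
    rw [← h1] at h2
    exact le_of_sq_le_sq h2 (norm_nonneg _)
  have hlim : ∀ x, Tendsto (fun d => P d x) atTop (𝓝 x) := by
    intro x
    have htop : ⊤ ≤ (Submodule.span ℝ (Set.range e)).topologicalClosure :=
      ((Submodule.dense_iff_topologicalClosure_eq_top).1 htot).ge
    have h := ((HilbertBasis.mk he htop).hasSum_repr x).tendsto_sum_nat
    simpa [hP, HilbertBasis.repr_apply_apply] using h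
  have hjoint : ∀ x, Tendsto (fun p : ℕ × H => P p.1 p.2) (atTop ×ˢ 𝓝 x) (𝓝 x) := by
    intro x
    rw [tendsto_iff_norm_sub_tendsto_zero]
    have hA : Tendsto (fun p : ℕ × H => ‖p.2 - x‖) (atTop ×ˢ 𝓝 x) (𝓝 0) :=
      (tendsto_iff_norm_sub_tendsto_zero.1 tendsto_id).comp tendsto_snd
    have hB : Tendsto (fun p : ℕ × H => ‖P p.1 x - x‖) (atTop ×ˢ 𝓝 x) (𝓝 0) :=
      (tendsto_iff_norm_sub_tendsto_zero.1 (hlim x)).comp tendsto_fst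
    have hAB := hA.add hB
    rw [add_zero] at hAB
    refine squeeze_zero (fun _ => norm_nonneg _) (fun p => ?_) hAB
    calc ‖P p.1 p.2 - x‖ = ‖P p.1 (p.2 - x) + (P p.1 x - x)‖ := by
          rw [hsub]; congr 1; abel
      _ ≤ ‖P p.1 (p.2 - x)‖ + ‖P p.1 x - x‖ := norm_add_le _ _
      _ ≤ _ := by gcongr; exact hnorm _ _
  have hh : Continuous fun x => ⟪L (gradient v x), x⟫ := hLDv.inner continuous_id
  have key : ∀ d x, ⟪L (gradient v x - P d (gradient v (P d x))), x⟫
      = ⟪L (gradient v x), x⟫ - ⟪L (gradient v (P d x)), P d x⟫ := by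
    intro d x
    rw [map_sub, inner_sub_left, hcomm d _ (hDvdom _), hsymm]
  intro ε hε
  have hloc : ∀ x ∈ K, ∃ t ∈ 𝓝[K] x, ∀ᶠ d in atTop, ∀ y ∈ t,
      |⟪L (gradient v y - P d (gradient v (P d y))), y⟫| < ε := by
    intro x _
    have h1 : Tendsto (fun p : ℕ × H => ⟪L (gradient v p.2), p.2⟫
        - ⟪L (gradient v (P p.1 p.2)), P p.1 p.2⟫) (atTop ×ˢ 𝓝 x) (𝓝 0) := by
      have := ((hh.tendsto x).comp tendsto_snd).sub ((hh.tendsto x).comp (hjoint x))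
      rw [sub_self] at this
      exact this
    have h2 := (Metric.tendsto_nhds.1 h1) ε hε
    obtain ⟨pa, ha, pb, hb, hab⟩ := eventually_prod_iff.1 h2
    refine ⟨{y | pb y}, mem_nhdsWithin_of_mem_nhds hb, ?_⟩
    filter_upwards [ha] with d hd y hy
    rw [key]
    simpa [Real.dist_eq] using hab hd hy
  have hfin : ∀ᶠ d in atTop, ∀ y ∈ K,
      |⟪L (gradient v y - P d (gradient v (P d y))), y⟫| < ε := by
    refine hK.induction_on (p := fun t => ∀ᶠ d in atTop, ∀ y ∈ t,
      |⟪L (gradient v y - P d (gradient v (P d y))), y⟫| < ε) (by simp) ?_ ?_ hloc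
    · intro s t hst ht
      filter_upwards [ht] with d hd y hy using hd y (hst hy)
    · intro s t hs ht
      filter_upwards [hs, ht] with d h1 h2 y hy
      exact hy.elim (h1 y) (h2 y)
  exact eventually_atTop.1 hfin
end

section
/- Verification of the L² consistency condition via the adjoint: let p > 2 and q ≥ 1, let v ∈ C²(H) be such that Dv(x) ∈ D(L) for every x ∈ H and ‖Dv(x)‖^{2p/(p−2)} ≤ C(1+‖x‖^q) for some C > 0 and all x ∈ H. Let μ be a Borel probability measure on H such that μ(H \ D(L*)) = 0, ∫_{D(L*)} ‖L* x‖^p μ(dx) < ∞ and ∫_H ‖x‖^q μ(dx) < ∞. Then ∫_H |⟨L(Dv(x) − P_d Dv(P_d x)), x⟩|² μ(dx) → 0 as d → ∞. -/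
open Filter Topology MeasureTheory
open scoped RealInnerProductSpace ENNReal

lemma aux_young (p A u b : ℝ) (hp : 2 < p) (hu : 0 ≤ u) (hb : 0 ≤ b)
    (h : u ^ (2 * p / (p - 2)) ≤ A) : u ^ 2 * b ^ 2 ≤ A + b ^ p := by
  have hp2 : 0 < p - 2 := by linarith
  have hc : (p / (p - 2)).HolderConjugate (p / 2) := by
    rw [Real.holderConjugate_iff]
    refine ⟨?_, ?_⟩
    · rw [lt_div_iff₀ hp2]; linarith
    · field_simp; ring
  have h1 := Real.young_inequality_of_nonneg (sq_nonneg u) (sq_nonneg b) hc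
  have e1 : (u ^ 2) ^ (p / (p - 2)) = u ^ (2 * p / (p - 2)) := by
    rw [← Real.rpow_natCast, ← Real.rpow_mul hu]; congr 1; push_cast; ring
  have e2 : (b ^ 2) ^ (p / 2) = b ^ p := by
    rw [← Real.rpow_natCast, ← Real.rpow_mul hb]; congr 1; push_cast; ring
  rw [e1, e2] at h1
  have h2 : u ^ (2 * p / (p - 2)) / (p / (p - 2)) ≤ u ^ (2 * p / (p - 2)) :=
    div_le_self (Real.rpow_nonneg hu _) hc.lt.le
  have h3 : b ^ p / (p / 2) ≤ b ^ p :=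
    div_le_self (Real.rpow_nonneg hb _) hc.symm.lt.le
  linarith

lemma aux_proj_le {H : Type*} [NormedAddCommGroup H] [InnerProductSpace ℝ H]
    (e : ℕ → H) (he : Orthonormal ℝ e) (d : ℕ) (x : H) :
    ‖∑ i ∈ Finset.range d, ⟪e i, x⟫ • e i‖ ≤ ‖x‖ := by
  have h1 : ‖∑ i ∈ Finset.range d, ⟪e i, x⟫ • e i‖ ^ 2
      = ∑ i ∈ Finset.range d, ‖⟪e i, x⟫‖ ^ 2 := by
    rw [← real_inner_self_eq_norm_sq, he.inner_sum]
    refine Finset.sum_congr rfl fun i _ => ?_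
    simp [sq]
  have h2 := he.sum_inner_products_le x (s := Finset.range d)
  rw [← h1] at h2
  exact le_of_sq_le_sq h2 (norm_nonneg _)

lemma aux_proj_tendsto {H : Type*} [NormedAddCommGroup H] [InnerProductSpace ℝ H] [CompleteSpace H]
    (e : ℕ → H) (he : Orthonormal ℝ e)
    (htot : Dense ((Submodule.span ℝ (Set.range e) : Submodule ℝ H) : Set H)) (x : H) :
    Tendsto (fun d : ℕ => ∑ i ∈ Finset.range d, ⟪e i, x⟫ • e i) atTop (𝓝 x) := by
  let B := HilbertBasis.mk he (Submodule.dense_iff_topologicalClosure_eq_top.1 htot).ge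
  have := (B.hasSum_repr x).tendsto_sum_nat
  simpa [B, HilbertBasis.repr_apply_apply] using this

/-- verification of the L² consistency condition via the adjoint.  `LstarDom` and
`Lstar` represent the domain `D(L*)` and the action of the Hilbert-space adjoint of the
(possibly unbounded) closed, densely defined operator `L`, characterized by boundedness of the
functional `y ↦ ⟪L y, x⟫` on the domain of `L` and by the adjoint relation. -/
theorem consistency_L2_via_adjoint
    {H : Type*} [NormedAddCommGroup H] [InnerProductSpace ℝ H] [CompleteSpace H]
    [MeasurableSpace H] [BorelSpace H]
    (e : ℕ → H) (he : Orthonormal ℝ e)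
    (htot : Dense ((Submodule.span ℝ (Set.range e) : Submodule ℝ H) : Set H))
    (P : ℕ → H → H)
    (hP : ∀ (d : ℕ) (x : H), P d x = ∑ i ∈ Finset.range d, ⟪e i, x⟫ • e i)
    (L : H →ₗ[ℝ] H) (Ldom : Submodule ℝ H)
    (hLdense : Dense (Ldom : Set H))
    (hLclosed : IsClosed {p : H × H | p.1 ∈ Ldom ∧ p.2 = L p.1})
    (heL : ∀ i : ℕ, e i ∈ Ldom)
    (p q : ℝ) (hp : 2 < p) (hq : 1 ≤ q)
    (v : H → ℝ) (hv : ContDiff ℝ 2 v)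
    (hDvdom : ∀ x : H, gradient v x ∈ Ldom)
    (C : ℝ) (hC : 0 < C)
    (hgrowth : ∀ x : H, ‖gradient v x‖ ^ (2 * p / (p - 2)) ≤ C * (1 + ‖x‖ ^ q))
    (LstarDom : Set H) (Lstar : H → H)
    (hdomchar : ∀ x : H, x ∈ LstarDom ↔ ∃ c : ℝ, ∀ y ∈ Ldom, |⟪L y, x⟫| ≤ c * ‖y‖)
    (hadj : ∀ y ∈ Ldom, ∀ x ∈ LstarDom, ⟪L y, x⟫ = ⟪y, Lstar x⟫)
    (μ : Measure H) [IsProbabilityMeasure μ]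
    (hfull : μ LstarDomᶜ = 0)
    (hLstarp : ∫⁻ x in LstarDom, ENNReal.ofReal (‖Lstar x‖ ^ p) ∂μ < ⊤)
    (hμq : ∫⁻ x, ENNReal.ofReal (‖x‖ ^ q) ∂μ < ⊤) :
    Tendsto (fun d : ℕ =>
        ∫⁻ x, ENNReal.ofReal
          (|⟪L (gradient v x - P d (gradient v (P d x))), x⟫| ^ (2 : ℝ)) ∂μ)
      atTop (𝓝 0) := by
  have hPn : ∀ d x, ‖P d x‖ ≤ ‖x‖ := fun d x => by rw [hP]; exact aux_proj_le e he d x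
  have hPt : ∀ x, Tendsto (fun d => P d x) atTop (𝓝 x) := fun x => by
    simp only [hP]; exact aux_proj_tendsto e he htot x
  have hPsub : ∀ d x y, P d (x - y) = P d x - P d y := fun d x y => by
    simp only [hP, inner_sub_right, sub_smul, Finset.sum_sub_distrib]
  have hPc : ∀ d, Continuous (P d) := fun d => by
    have : P d = fun x => ∑ i ∈ Finset.range d, ⟪e i, x⟫ • e i := funext (hP d)
    rw [this]; fun_prop
  have hg : Continuous (gradient v) := by
    have h1 : Continuous (fderiv ℝ v) := hv.continuous_fderiv (by norm_num)
    exact (InnerProductSpace.toDual ℝ H).symm.continuous.comp h1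
  have hPdom : ∀ d x, P d x ∈ Ldom := fun d x => by
    rw [hP]; exact Submodule.sum_mem _ fun i _ => Ldom.smul_mem _ (heL i)
  set w : ℕ → H → H := fun d x => gradient v x - P d (gradient v (P d x)) with hw
  have hwc : ∀ d, Continuous (w d) := fun d =>
    hg.sub ((hPc d).comp (hg.comp (hPc d)))
  have hwdom : ∀ d x, w d x ∈ Ldom := fun d x => Ldom.sub_mem (hDvdom x) (hPdom _ _)
  have hwt : ∀ x, Tendsto (fun d => w d x) atTop (𝓝 0) := fun x => by
    have h1 : Tendsto (fun d => gradient v (P d x) - gradient v x) atTop (𝓝 0) := by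
      have := ((hg.tendsto x).comp (hPt x)).sub_const (gradient v x)
      simpa using this
    have h2 : Tendsto (fun d => P d (gradient v (P d x) - gradient v x)) atTop (𝓝 0) :=
      squeeze_zero_norm (fun d => hPn d _) (by simpa using h1.norm)
    have h3 := ((hPt (gradient v x)).const_sub (gradient v x)).sub h2
    simp only [sub_self] at h3
    refine h3.congr fun d => ?_
    simp only [hPsub, hw, sub_sub_sub_cancel_right, sub_sub]; congr 1; abel
  have hae : ∀ᵐ x ∂μ, x ∈ LstarDom := hfull
  rw [Measure.restrict_eq_self_of_ae_mem hae] at hLstarp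
  have hmeas0 : ∀ d, AEMeasurable (fun x => ⟪L (w d x), x⟫) μ := fun d => by
    refine aemeasurable_of_tendsto_metrizable_ae atTop
      (f := fun (N : ℕ) x => ∑ i ∈ Finset.range N, ⟪e i, w d x⟫ * ⟪L (e i), x⟫) ?_ ?_
    · intro N
      have := hwc d
      exact Continuous.aemeasurable (by fun_prop)
    · filter_upwards [hae] with x hx
      have h1 : Tendsto (fun N => ⟪P N (w d x), Lstar x⟫) atTop (𝓝 ⟪w d x, Lstar x⟫) :=
        (hPt (w d x)).inner tendsto_const_nhds
      rw [hadj _ (hwdom d x) x hx]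
      refine h1.congr fun N => ?_
      rw [hP, sum_inner]
      refine Finset.sum_congr rfl fun i _ => ?_
      rw [real_inner_smul_left, hadj _ (heL i) x hx]
  have key := tendsto_lintegral_of_dominated_convergence' (μ := μ)
    (F := fun d x => ENNReal.ofReal (|⟪L (w d x), x⟫| ^ (2 : ℝ))) (f := fun _ => 0)
    (fun x => ENNReal.ofReal (4 * C) * (1 + ENNReal.ofReal (‖x‖ ^ q))
      + ENNReal.ofReal 4 * ENNReal.ofReal (‖Lstar x‖ ^ p)) ?_ ?_ ?_ ?_
  · rw [lintegral_zero] at key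
    exact key
  · intro d
    have := (hmeas0 d).norm.pow_const (2 : ℝ)
    exact this.ennreal_ofReal
  · intro d
    filter_upwards [hae] with x hx
    have hq0 : 0 ≤ ‖x‖ ^ q := Real.rpow_nonneg (norm_nonneg _) _
    have hp0 : 0 ≤ ‖Lstar x‖ ^ p := Real.rpow_nonneg (norm_nonneg _) _
    rw [← ENNReal.ofReal_one, ← ENNReal.ofReal_add zero_le_one hq0,
      ← ENNReal.ofReal_mul (by positivity), ← ENNReal.ofReal_mul (by positivity),
      ← ENNReal.ofReal_add (by positivity) (by positivity)]
    apply ENNReal.ofReal_le_ofReal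
    rw [hadj _ (hwdom d x) x hx, Real.rpow_two]
    have hA2 : ‖gradient v (P d x)‖ ^ (2 * p / (p - 2)) ≤ C * (1 + ‖x‖ ^ q) := by
      refine (hgrowth _).trans ?_
      have := Real.rpow_le_rpow (norm_nonneg _) (hPn d x) (by linarith : 0 ≤ q)
      gcongr
    have y1 := aux_young p _ _ _ hp (norm_nonneg _) (norm_nonneg (Lstar x)) (hgrowth x)
    have y2 := aux_young p _ _ _ hp (norm_nonneg _) (norm_nonneg (Lstar x)) hA2
    have hn : ‖w d x‖ ≤ ‖gradient v x‖ + ‖gradient v (P d x)‖ :=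
      (norm_sub_le _ _).trans (by gcongr; exact hPn _ _)
    have h1 : |⟪w d x, Lstar x⟫| ^ 2 ≤ (‖w d x‖ * ‖Lstar x‖) ^ 2 := by
      gcongr; exact abs_real_inner_le_norm _ _
    have h2 : (‖w d x‖ * ‖Lstar x‖) ^ 2
        ≤ ((‖gradient v x‖ + ‖gradient v (P d x)‖) * ‖Lstar x‖) ^ 2 := by gcongr
    nlinarith [sq_nonneg ((‖gradient v x‖ - ‖gradient v (P d x)‖) * ‖Lstar x‖)]
  · have hm : Measurable fun x : H => ENNReal.ofReal (‖x‖ ^ q) := by fun_prop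
    rw [lintegral_add_left (by fun_prop), lintegral_const_mul _ (by fun_prop),
      lintegral_add_left (by fun_prop), lintegral_const_mul' _ _ ENNReal.ofReal_ne_top]
    refine ENNReal.add_ne_top.2 ⟨ENNReal.mul_ne_top ENNReal.ofReal_ne_top
      (ENNReal.add_ne_top.2 ⟨by simp, hμq.ne⟩),
      ENNReal.mul_ne_top ENNReal.ofReal_ne_top hLstarp.ne⟩
  · filter_upwards [hae] with x hx
    have h1 : Tendsto (fun d => ⟪w d x, Lstar x⟫) atTop (𝓝 0) := by
      simpa using (hwt x).inner (tendsto_const_nhds (x := Lstar x))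
    have h2 := ENNReal.tendsto_ofReal (h1.abs.pow 2)
    simp only [abs_zero, ne_eq, OfNat.ofNat_ne_zero, not_false_eq_true, zero_pow,
      ENNReal.ofReal_zero] at h2
    refine h2.congr fun d => ?_
    rw [hadj _ (hwdom d x) x hx, Real.rpow_two]
end

section
/- Sequential continuity of the induced operator F^{op} (Lemma on continuity of Φ∘F): let F : H × ℝ × H × L(H) → ℝ satisfy the Lipschitz-type estimate and the sequential continuity assumption below. Let Z_n, Z : H → L(H) be continuous maps (operator-norm topology on L(H)) such that for all compact sets K, K' ⊆ H, sup_{x∈K, h∈K'} ‖(Z_n(x) − Z(x)) h‖ → 0 as n → ∞. Then for every compact set 𝒦 ⊆ H × ℝ × H, sup_{(x,v,p)∈𝒦} |F(x, v, p, Z_n(x)) − F(x, v, p, Z(x))| → 0 as n → ∞. -/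
open Filter Topology
open scoped RealInnerProductSpace

/-- sequential continuity of the induced operator `F^{op}`: if `F` satisfies the
Lipschitz-type estimate and is sequentially continuous in the Hessian variable for the strong
operator topology, and `Z n → Z` uniformly on compacts applied to compact sets of vectors, then
`F(x, v, p, Z n (x)) → F(x, v, p, Z (x))` uniformly on compact subsets of `H × ℝ × H`. -/
theorem Fop_sequentially_continuous
    {H : Type*} [NormedAddCommGroup H] [InnerProductSpace ℝ H] [CompleteSpace H]
    [SecondCountableTopology H]
    (F : H → ℝ → H → (H →L[ℝ] H) → ℝ)
    (hFcont : Continuous fun w : H × ℝ × H × (H →L[ℝ] H) => F w.1 w.2.1 w.2.2.1 w.2.2.2)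
    (C k : ℝ) (hC : 0 < C) (hk : 0 ≤ k)
    (hLip : ∀ (x : H) (v r : ℝ) (p q : H) (Z Y : H →L[ℝ] H),
      |F x v p Z - F x r q Y| ≤ C * (|v - r| + ‖p - q‖ + ‖Z - Y‖) * (1 + ‖x‖ ^ k))
    (hseq : ∀ (xn : ℕ → H) (x : H) (vn : ℕ → ℝ) (v : ℝ) (pn : ℕ → H) (p : H)
        (Yn : ℕ → H →L[ℝ] H) (Y : H →L[ℝ] H),
        Tendsto xn atTop (𝓝 x) → Tendsto vn atTop (𝓝 v) → Tendsto pn atTop (𝓝 p) →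
        (∀ h : H, Tendsto (fun n => Yn n h) atTop (𝓝 (Y h))) →
        Tendsto (fun n => F (xn n) (vn n) (pn n) (Yn n)) atTop (𝓝 (F x v p Y)))
    (Z : ℕ → H → (H →L[ℝ] H)) (Z₀ : H → (H →L[ℝ] H))
    (hZcont : ∀ n, Continuous (Z n)) (hZ₀cont : Continuous Z₀)
    (hZconv : ∀ (K K' : Set H), IsCompact K → IsCompact K' → ∀ ε > 0,
      ∃ N : ℕ, ∀ n ≥ N, ∀ x ∈ K, ∀ h ∈ K', ‖(Z n x - Z₀ x) h‖ < ε)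
    (𝒦 : Set (H × ℝ × H)) (h𝒦 : IsCompact 𝒦) (ε : ℝ) (hε : 0 < ε) :
    ∃ N : ℕ, ∀ n ≥ N, ∀ w ∈ 𝒦,
      |F w.1 w.2.1 w.2.2 (Z n w.1) - F w.1 w.2.1 w.2.2 (Z₀ w.1)| < ε := by
  by_contra hcon
  push Not at hcon
  choose n hn w hw hbad using hcon
  obtain ⟨a, -, φ, hφ, hlim⟩ := h𝒦.tendsto_subseq hw
  have hx : Tendsto (fun j => (w (φ j)).1) atTop (𝓝 a.1) :=
    (continuous_fst.tendsto a).comp hlim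
  have hv : Tendsto (fun j => (w (φ j)).2.1) atTop (𝓝 a.2.1) :=
    ((continuous_fst.comp continuous_snd).tendsto a).comp hlim
  have hp : Tendsto (fun j => (w (φ j)).2.2) atTop (𝓝 a.2.2) :=
    ((continuous_snd.comp continuous_snd).tendsto a).comp hlim
  have h0 : ∀ h : H, Tendsto (fun j => Z₀ (w (φ j)).1 h) atTop (𝓝 (Z₀ a.1 h)) := fun h =>
    ((hZ₀cont.clm_apply continuous_const).tendsto a.1).comp hx
  have h1 : ∀ h : H, Tendsto (fun j => Z (n (φ j)) (w (φ j)).1 h) atTop (𝓝 (Z₀ a.1 h)) := by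
    intro h
    have hd : Tendsto (fun j => (Z (n (φ j)) (w (φ j)).1 - Z₀ (w (φ j)).1) h) atTop (𝓝 0) := by
      rw [Metric.tendsto_atTop]
      intro δ hδ
      obtain ⟨N, hN⟩ := hZconv (Prod.fst '' 𝒦) {h} (h𝒦.image continuous_fst)
        isCompact_singleton δ hδ
      refine ⟨N, fun j hj => ?_⟩
      rw [dist_zero_right]
      exact hN _ (hj.trans ((hφ.id_le j).trans (hn (φ j)))) _
        (Set.mem_image_of_mem _ (hw (φ j))) h rfl
    simpa using hd.add (h0 h)
  have hA := hseq _ _ _ _ _ _ _ _ hx hv hp h1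
  have hB := hseq _ _ _ _ _ _ _ _ hx hv hp h0
  have hAB := (hA.sub hB).abs
  rw [sub_self, abs_zero] at hAB
  exact absurd (ge_of_tendsto' hAB fun j => hbad (φ j)) (not_le.mpr hε)
end
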